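/- Let p be a prime and let H be a nonabelian finite group acting faithfully on a faithful irreducible module V over a field of characteristic p, and let k be a subfield of the complex numbers containing the primitive pth roots of unity. If G = V ⋊ H, then acd_k(G) ≥ 2. -/

import Mathlib

open scoped BigOperators

/-- The set of irreducible complex characters of `G`, viewed as functions `G → ℂ`. -/
def Irr (G : Type) [Monoid G] : Set (G → ℂ) :=
  {f | ∃ V : FDRep ℂ G, CategoryTheory.Simple V ∧ f = V.character}

/-- The degree of a character, i.e. its value at the identity (a natural number). -/
noncomputable def charDeg {G : Type} [One G] (f : G → ℂ) : ℕ := ⌊(f 1).re⌋₊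

/-- The average of the degrees of the characters in a set `S` of characters. -/
noncomputable def acd {G : Type} [One G] (S : Set (G → ℂ)) : ℝ :=
  (∑ᶠ f ∈ S, (f 1).re) / (S.ncard : ℝ)

/-- `G` has a normal `p`-complement: a normal subgroup of order coprime to `p`
whose index is a power of `p`. -/
def HasNormalPComplement (p : ℕ) (G : Type) [Group G] : Prop :=
  ∃ N : Subgroup G, N.Normal ∧ Nat.Coprime (Nat.card N) p ∧ ∃ n : ℕ, N.index = p ^ n

section helpers
variable {H V : Type} [Group H] [CommGroup V] (φ : H →* MulAut V)

/-- stabilizer of a linear character -/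
def stab (l : V →* ℂˣ) : Subgroup H where
  carrier := {h | ∀ v, l (φ h v) = l v}
  one_mem' := by intro v; simp
  mul_mem' := by
    intro a b ha hb v
    rw [map_mul, MulAut.mul_apply, ha, hb]
  inv_mem' := by
    intro a ha v
    have := ha (φ a⁻¹ v)
    rw [← MulAut.mul_apply, ← map_mul] at this
    simpa using this.symm

lemma mem_stab {l : V →* ℂˣ} {h : H} : h ∈ stab φ l ↔ ∀ v, l (φ h v) = l v := Iff.rfl

/-- big representation on functions on `H` -/
noncomputable def bigRep (l : V →* ℂˣ) : Representation ℂ (V ⋊[φ] H) (H → ℂ) where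
  toFun g :=
    { toFun := fun f x => (l (φ x g.left) : ℂ) * f (x * g.right)
      map_add' := by intro f f'; ext x; simp [mul_add]
      map_smul' := by intro c f; ext x; simp; ring }
  map_one' := by
    apply LinearMap.ext; intro f; ext x; simp
  map_mul' := by
    intro a b
    apply LinearMap.ext; intro f; ext x
    simp [mul_assoc]

lemma bigRep_apply (l : V →* ℂˣ) (g : V ⋊[φ] H) (f : H → ℂ) (x : H) :
    bigRep φ l g f x = (l (φ x g.left) : ℂ) * f (x * g.right) := rfl

/-- subspace of `ψ`-equivariant functions -/
def eqSub (T : Subgroup H) (ψ : T →* ℂˣ) : Submodule ℂ (H → ℂ) where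
  carrier := {f | ∀ (t : T) x, f (t * x) = (ψ t : ℂ) * f x}
  add_mem' := by intro a b ha hb t x; simp [ha t x, hb t x, mul_add]
  zero_mem' := by intro t x; simp
  smul_mem' := by intro c a ha t x; simp [ha t x]; ring

lemma mem_eqSub {T : Subgroup H} {ψ : T →* ℂˣ} {f : H → ℂ} :
    f ∈ eqSub T ψ ↔ ∀ (t : T) x, f (t * x) = (ψ t : ℂ) * f x := Iff.rfl

lemma bigRep_mem (l : V →* ℂˣ) (ψ : stab φ l →* ℂˣ) (g : V ⋊[φ] H) (f : H → ℂ)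
    (hf : f ∈ eqSub (stab φ l) ψ) : bigRep φ l g f ∈ eqSub (stab φ l) ψ := by
  intro t x
  rw [bigRep_apply, bigRep_apply, mul_assoc, hf t, map_mul, MulAut.mul_apply,
    (mem_stab φ).1 t.2]
  ring

/-- the induced representation -/
noncomputable def indRep (l : V →* ℂˣ) (ψ : stab φ l →* ℂˣ) :
    Representation ℂ (V ⋊[φ] H) (eqSub (stab φ l) ψ) where
  toFun g := (bigRep φ l g).restrict (bigRep_mem φ l ψ g)
  map_one' := by ext; simp
  map_mul' x y := by ext; simp

open Classical in
/-- extension by zero of `ψ` -/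
noncomputable def dFun (T : Subgroup H) (ψ : T →* ℂˣ) (x : H) : ℂ :=
  if h : x ∈ T then ψ ⟨x, h⟩ else 0

lemma dFun_coe (T : Subgroup H) (ψ : T →* ℂˣ) (t : T) : dFun T ψ t = ψ t := by
  simp [dFun]

lemma dFun_of_notMem (T : Subgroup H) (ψ : T →* ℂˣ) {x : H} (hx : x ∉ T) : dFun T ψ x = 0 := by
  simp [dFun, hx]

lemma dFun_mem (T : Subgroup H) (ψ : T →* ℂˣ) : dFun T ψ ∈ eqSub T ψ := by
  intro t x
  by_cases hx : x ∈ T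
  · have h1 := dFun_coe T ψ (t * ⟨x, hx⟩)
    have h2 := dFun_coe T ψ ⟨x, hx⟩
    simp only [Subgroup.coe_mul] at h1 h2
    rw [h1, h2]; simp
  · rw [dFun_of_notMem T ψ hx, dFun_of_notMem T ψ, mul_zero]
    rwa [Subgroup.mul_mem_cancel_left _ t.2]

variable [Fintype H]

lemma eqSub_formula (T : Subgroup H) (ψ : T →* ℂˣ) {f : H → ℂ} (hf : f ∈ eqSub T ψ) (x : H) :
    f x = (Nat.card T : ℂ)⁻¹ * ∑ h, f h * dFun T ψ (x * h⁻¹) := by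
  classical
  have hT : (Nat.card T : ℂ) ≠ 0 := by exact_mod_cast Nat.card_pos.ne'
  rw [eq_inv_mul_iff_mul_eq₀ hT]
  have e : ∑ h, f h * dFun T ψ (x * h⁻¹) = ∑ y, f (y⁻¹ * x) * dFun T ψ y := by
    refine Fintype.sum_equiv ((Equiv.inv H).trans (Equiv.mulLeft x)) _ _ ?_
    intro h; simp
  rw [e]
  have e2 : ∀ y, f (y⁻¹ * x) * dFun T ψ y = if y ∈ T then f x else 0 := by
    intro y
    split_ifs with hy
    · have h1 := hf (⟨y, hy⟩⁻¹) x
      have h2 := dFun_coe T ψ ⟨y, hy⟩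
      simp only [Subgroup.coe_inv] at h1 h2
      rw [h1, h2]; simp
      field_simp
    · rw [dFun_of_notMem T ψ hy, mul_zero]
  simp_rw [e2]
  rw [← Finset.sum_filter, Finset.sum_const, nsmul_eq_mul]
  congr 2
  rw [Nat.card_eq_fintype_card, Fintype.card_subtype]

/-- projection -/
noncomputable def proj (T : Subgroup H) (ψ : T →* ℂˣ) : (H → ℂ) →ₗ[ℂ] (H → ℂ) where
  toFun f x := (Nat.card T : ℂ)⁻¹ * ∑ h, f h * dFun T ψ (x * h⁻¹)
  map_add' := by intro f f'; ext x; simp [add_mul, Finset.sum_add_distrib, mul_add]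
  map_smul' := by
    intro c f; ext x; simp [Finset.mul_sum]
    exact Finset.sum_congr rfl fun _ _ => by ring

lemma proj_mem (T : Subgroup H) (ψ : T →* ℂˣ) (f : H → ℂ) : proj T ψ f ∈ eqSub T ψ := by
  intro t x
  simp only [proj, LinearMap.coe_mk, AddHom.coe_mk, mul_assoc, dFun_mem T ψ t]
  simp only [Finset.mul_sum]
  exact Finset.sum_congr rfl fun _ _ => by ring

lemma proj_of_mem (T : Subgroup H) (ψ : T →* ℂˣ) {f : H → ℂ} (hf : f ∈ eqSub T ψ) :
    proj T ψ f = f := by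
  ext x; exact (eqSub_formula T ψ hf x).symm

lemma indRep_char (l : V →* ℂˣ) (ψ : stab φ l →* ℂˣ) (g : V ⋊[φ] H) :
    (indRep φ l ψ).character g = (Nat.card (stab φ l) : ℂ)⁻¹ *
      ∑ x, (l (φ x g.left) : ℂ) * dFun (stab φ l) ψ (x * g.right * x⁻¹) := by
  classical
  have h0 : ∀ f, (bigRep φ l g ∘ₗ proj (stab φ l) ψ) f ∈ eqSub (stab φ l) ψ := fun f =>
    bigRep_mem φ l ψ g _ (proj_mem _ _ _)
  have h1 := LinearMap.trace_restrict_eq_of_forall_mem (eqSub (stab φ l) ψ)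
    (bigRep φ l g ∘ₗ proj (stab φ l) ψ) h0
  have h2 : (bigRep φ l g ∘ₗ proj (stab φ l) ψ).restrict (fun x _ => h0 x) = indRep φ l ψ g := by
    ext f x
    simp [indRep, proj_of_mem _ _ f.2]
  rw [h2] at h1
  rw [Representation.character, h1, LinearMap.trace_eq_matrix_trace ℂ (Pi.basisFun ℂ H),
    Matrix.trace, Finset.mul_sum]
  refine Finset.sum_congr rfl fun x _ => ?_
  simp [bigRep_apply, proj, Pi.single_apply]
  ring

variable [Fintype V]

lemma sum_twist (l : V →* ℂˣ) (x : H) [Decidable (x ∈ stab φ l)] :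
    ∑ v, ((l v)⁻¹ : ℂ) * (l (φ x v) : ℂ) = if x ∈ stab φ l then (Nat.card V : ℂ) else 0 := by
  classical
  let m : V →* ℂˣ := l⁻¹ * l.comp (φ x).toMonoidHom
  have := sum_hom_units ((Units.coeHom ℂ).comp m)
  have e : (Units.coeHom ℂ).comp m = 1 ↔ x ∈ stab φ l := by
    rw [mem_stab]
    constructor
    · intro h v
      have := DFunLike.congr_fun h v
      simp [m] at this
      rw [inv_mul_eq_one₀ (by simp)] at this
      exact (Units.ext this).symm
    · intro h
      ext v
      simp [m, h v]
  simp only [e] at this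
  rw [Nat.card_eq_fintype_card]
  convert! this using 2
  · simp [m]
  · simp

lemma indRep_irr (l : V →* ℂˣ) (ψ : stab φ l →* ℂˣ) : (indRep φ l ψ).IsIrreducible := by
  classical
  have hV0 : (Nat.card V : ℂ) ≠ 0 := by exact_mod_cast Nat.card_pos.ne'
  have key : ∀ W : Subrepresentation (indRep φ l ψ), W ≠ ⊥ →
      ∀ f, f ∈ W.toSubmodule := by
    intro W hW
    have : W.toSubmodule ≠ ⊥ := by
      intro h; exact hW (Subrepresentation.toSubmodule_injective h)
    obtain ⟨f, hfW, hf0⟩ := Submodule.exists_mem_ne_zero_of_ne_bot this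
    obtain ⟨x0, hx0⟩ : ∃ x0, (f : H → ℂ) x0 ≠ 0 := by
      by_contra! hcon
      exact hf0 (Subtype.ext (funext hcon))
    let d : eqSub (stab φ l) ψ := ⟨dFun (stab φ l) ψ, dFun_mem (stab φ l) ψ⟩
    have hd : d ∈ W.toSubmodule := by
      have hg := W.apply_mem_toSubmodule (SemidirectProduct.inr x0) hfW
      set g := indRep φ l ψ (SemidirectProduct.inr x0) f with hgdef
      have hg1 : (g : H → ℂ) 1 ≠ 0 := by
        simpa [hgdef, indRep, bigRep_apply] using hx0
      have he : ∑ v, ((l v)⁻¹ : ℂ) • indRep φ l ψ (SemidirectProduct.inl v) g ∈ W.toSubmodule :=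
        Submodule.sum_mem _ fun v _ => Submodule.smul_mem _ _ (W.apply_mem_toSubmodule _ hg)
      have heq : ∑ v, ((l v)⁻¹ : ℂ) • indRep φ l ψ (SemidirectProduct.inl v) g =
          ((Nat.card V : ℂ) * (g : H → ℂ) 1) • d := by
        ext x
        simp only [AddSubmonoidClass.coe_finsetSum, Finset.sum_apply, Submodule.coe_smul,
          Pi.smul_apply, smul_eq_mul, indRep, MonoidHom.coe_mk, OneHom.coe_mk,
          LinearMap.coe_restrict_apply, bigRep_apply, SemidirectProduct.left_inl,
          SemidirectProduct.right_inl, mul_one, d]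
        simp_rw [← mul_assoc]
        rw [← Finset.sum_mul, sum_twist]
        split_ifs with hx
        · have h1 := g.2 ⟨x, hx⟩ 1
          have h2 := dFun_coe (stab φ l) ψ ⟨x, hx⟩
          simp only [mul_one] at h1 h2
          rw [h1, h2]; ring
        · rw [dFun_of_notMem (stab φ l) ψ hx]; simp
      rw [heq] at he
      exact (Submodule.smul_mem_iff _ (mul_ne_zero hV0 hg1)).1 he
    intro f
    have hf : f = (Nat.card (stab φ l) : ℂ)⁻¹ •
        ∑ h, (f : H → ℂ) h • indRep φ l ψ (SemidirectProduct.inr h⁻¹) d := by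
      ext x
      rw [eqSub_formula (stab φ l) ψ f.2 x]
      simp [indRep, bigRep_apply, d]
    rw [hf]
    exact Submodule.smul_mem _ _ (Submodule.sum_mem _ fun v _ =>
      Submodule.smul_mem _ _ (W.apply_mem_toSubmodule _ hd))
  refine { exists_pair_ne := ⟨⊥, ⊤, ?_⟩, eq_bot_or_eq_top := ?_ }
  · intro h
    have h1 : (⟨dFun (stab φ l) ψ, dFun_mem (stab φ l) ψ⟩ : eqSub (stab φ l) ψ) ∈ (⊥ : Subrepresentation (indRep φ l ψ)) := by
      rw [h]; trivial
    have h2 : (⟨dFun (stab φ l) ψ, dFun_mem (stab φ l) ψ⟩ : eqSub (stab φ l) ψ) = 0 := h1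
    have h3 := congrFun (congrArg Subtype.val h2) 1
    have h4 := dFun_coe (stab φ l) ψ 1
    simp at h3 h4
    rw [h3] at h4
    simp at h4
  · intro W
    by_cases hW : W = ⊥
    · exact Or.inl hW
    · right
      apply Subrepresentation.toSubmodule_injective
      ext f
      exact ⟨fun _ => trivial, fun _ => key W hW f⟩

lemma simple_of_irr {G : Type} [Group G] [Fintype G] {X : Type} [AddCommGroup X] [Module ℂ X]
    [FiniteDimensional ℂ X] (ρ : Representation ℂ G X) [h : ρ.IsIrreducible] :
    CategoryTheory.Simple (FDRep.of ρ) := by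
  have := invertibleOfNonzero (NeZero.ne (Nat.card G : ℂ))
  rw [FDRep.simple_iff_char_is_norm_one]
  have h1 := Representation.char_orthonormal ρ ρ
  have h2 : Nonempty (ρ.Equiv ρ) := ⟨Representation.Equiv.refl ρ⟩
  rw [if_pos h2, inv_mul_eq_one₀ (NeZero.ne _)] at h1
  exact h1.symm

lemma ind_mem_Irr [Fintype (V ⋊[φ] H)] (l : V →* ℂˣ) (ψ : stab φ l →* ℂˣ) :
    (indRep φ l ψ).character ∈ Irr (V ⋊[φ] H) := by
  have := indRep_irr φ l ψ
  exact ⟨FDRep.of (indRep φ l ψ), simple_of_irr _, rfl⟩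

lemma ind_one (l : V →* ℂˣ) (ψ : stab φ l →* ℂˣ) :
    (indRep φ l ψ).character 1 = (stab φ l).index := by
  have h4 := dFun_coe (stab φ l) ψ 1
  simp only [OneMemClass.coe_one, map_one, Units.val_one] at h4
  have hT : (Nat.card (stab φ l) : ℂ) ≠ 0 := by exact_mod_cast Nat.card_pos.ne'
  rw [indRep_char, inv_mul_eq_iff_eq_mul₀ hT]
  have := (stab φ l).card_mul_index
  rw [← Nat.cast_mul, this]
  simp [h4]

lemma ind_inj (l : V →* ℂˣ) (ψ ψ' : stab φ l →* ℂˣ)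
    (h : (indRep φ l ψ).character = (indRep φ l ψ').character) : ψ = ψ' := by
  classical
  have hV0 : (Nat.card V : ℂ) ≠ 0 := by exact_mod_cast Nat.card_pos.ne'
  have hT : (Nat.card (stab φ l) : ℂ) ≠ 0 := by exact_mod_cast Nat.card_pos.ne'
  have key : ∀ (ψ : stab φ l →* ℂˣ) (t : stab φ l),
      ∑ v, ((l v)⁻¹ : ℂ) * (indRep φ l ψ).character ⟨v, t⟩ = Nat.card V * ψ t := by
    intro ψ t
    simp_rw [indRep_char]
    have : ∑ v, ((l v)⁻¹ : ℂ) * ((Nat.card (stab φ l) : ℂ)⁻¹ *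
      ∑ x, (l (φ x v) : ℂ) * dFun (stab φ l) ψ (x * t * x⁻¹)) =
      (Nat.card (stab φ l) : ℂ)⁻¹ * ∑ x, (∑ v, ((l v)⁻¹ : ℂ) * (l (φ x v) : ℂ)) *
        dFun (stab φ l) ψ (x * t * x⁻¹) := by
      simp_rw [Finset.mul_sum, Finset.sum_mul, Finset.mul_sum]
      rw [Finset.sum_comm]
      refine Finset.sum_congr rfl fun _ _ => Finset.sum_congr rfl fun _ _ => by ring
    rw [this, inv_mul_eq_iff_eq_mul₀ hT]
    have e2 : ∀ x, (∑ v, ((l v)⁻¹ : ℂ) * (l (φ x v) : ℂ)) *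
        dFun (stab φ l) ψ (x * t * x⁻¹) = if x ∈ stab φ l then (Nat.card V * ψ t : ℂ) else 0 := by
      intro x
      rw [sum_twist]
      split_ifs with hx
      · have h1 := dFun_coe (stab φ l) ψ (⟨x, hx⟩ * t * ⟨x, hx⟩⁻¹)
        simp only [Subgroup.coe_mul, Subgroup.coe_inv] at h1
        rw [h1]
        simp
      · simp
    simp_rw [e2]
    rw [← Finset.sum_filter, Finset.sum_const, nsmul_eq_mul]
    congr 2
    rw [Nat.card_eq_fintype_card, Fintype.card_subtype]
  ext t
  have := key ψ t
  rw [h, key ψ' t] at this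
  exact (mul_left_cancel₀ hV0 this).symm

end helpers
section counting

lemma card_hom_le (Q K : Type) [Group Q] [Finite Q] [Field K] :
    Finite (Q →* Kˣ) ∧ Nat.card (Q →* Kˣ) ≤ Nat.card Q := by
  classical
  have := Fintype.ofFinite Q
  have h0 : LinearIndependent K (fun f : Q →* Kˣ => (fun q => (f q : K))) := by
    have := (linearIndependent_monoidHom Q K).comp
      (fun f : Q →* Kˣ => (Units.coeHom K).comp f) (by
        intro f g h
        ext q
        exact DFunLike.congr_fun h q)
    exact this
  have hf : Finite (Q →* Kˣ) := h0.finite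
  refine ⟨hf, ?_⟩
  have := Fintype.ofFinite (Q →* Kˣ)
  have h1 := h0.fintype_card_le_finrank
  rw [Module.finrank_fintype_fun_eq_card] at h1
  simpa [Nat.card_eq_fintype_card] using h1

lemma Irr_finite (G : Type) [Group G] [Fintype G] : (Irr G).Finite := by
  classical
  have := invertibleOfNonzero (NeZero.ne (Nat.card G : ℂ))
  have h0 : LinearIndependent ℂ (fun f : Irr G => (f : G → ℂ)) := by
    let B : (G → ℂ) →ₗ[ℂ] (G → ℂ) →ₗ[ℂ] ℂ := LinearMap.mk₂ ℂ (fun f f' => ∑ g, f g * f' g⁻¹)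
      (by intros; simp [add_mul, Finset.sum_add_distrib])
      (by intros; simp [Finset.mul_sum, mul_assoc])
      (by intros; simp [mul_add, Finset.sum_add_distrib])
      (by intros; simp only [Finset.mul_sum, Pi.smul_apply, smul_eq_mul]
          exact Finset.sum_congr rfl fun _ _ => by ring)
    refine LinearMap.linearIndependent_of_isOrthoᵢ (B := B) ?_ ?_
    · rintro ⟨f, X, hX, rfl⟩ ⟨f', Y, hY, rfl⟩ hne
      have h1 := FDRep.char_orthonormal X Y
      rw [if_neg] at h1
      · rw [mul_eq_zero_iff_left (inv_ne_zero (NeZero.ne _))] at h1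
        exact h1
      · rintro ⟨i⟩
        exact hne (Subtype.ext (FDRep.char_iso i))
    · rintro ⟨f, X, hX, rfl⟩
      have h1 := FDRep.char_orthonormal X X
      rw [if_pos ⟨CategoryTheory.Iso.refl X⟩] at h1
      intro h2
      have h3 : ∑ g, X.character g * X.character g⁻¹ = 0 := h2
      rw [h3] at h1
      simp at h1
  have : Finite (Irr G) := h0.finite
  exact Set.toFinite _

lemma Irr_deg {G : Type} [Group G] {f : G → ℂ} (hf : f ∈ Irr G) :
    ∃ n : ℕ, 1 ≤ n ∧ f 1 = n := by
  obtain ⟨V, hV, rfl⟩ := hf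
  refine ⟨Module.finrank ℂ V, ?_, V.char_one⟩
  by_contra! h
  have h0 : Module.finrank ℂ V = 0 := by omega
  have : Subsingleton V := Module.finrank_zero_iff.1 h0
  apply CategoryTheory.id_nonzero V
  ext x
  exact Subsingleton.elim (α := V) _ _

lemma Irr_mul {G : Type} [Group G] {f : G → ℂ} (hf : f ∈ Irr G) (h1 : f 1 = 1) (a b : G) :
    f (a * b) = f a * f b := by
  obtain ⟨V, hV, rfl⟩ := hf
  have hr : Module.finrank ℂ V = 1 := by
    rw [V.char_one] at h1; exact_mod_cast h1
  have key : ∀ g, V.ρ g = V.character g • LinearMap.id := by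
    intro g
    obtain ⟨c, hc⟩ := (by
      obtain ⟨v, hv, hall⟩ := finrank_eq_one_iff'.1 hr
      obtain ⟨c, hc⟩ := hall (V.ρ g v)
      refine ⟨c, LinearMap.ext fun w => ?_⟩
      obtain ⟨d, rfl⟩ := hall w
      rw [map_smul, ← hc]
      simp [smul_smul, mul_comm] : ∃ c : ℂ, V.ρ g = c • LinearMap.id)
    have : V.character g = c := by
      change LinearMap.trace ℂ V (V.ρ g) = c
      rw [hc, map_smul, LinearMap.trace_id, hr]; simp
    rw [this, hc]
  change LinearMap.trace ℂ V (V.ρ (a * b)) = _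
  rw [map_mul, key a, key b, Module.End.mul_eq_comp]
  simp [LinearMap.comp_smul, hr, mul_comm]

lemma index_bound {H : Type} [Group H] [Finite H] (T : Subgroup H) (hT : ¬ commutator H ≤ T) :
    (T ⊔ commutator H).index + 2 ≤ T.index := by
  have h := Subgroup.relIndex_mul_index (le_sup_left : T ≤ T ⊔ commutator H)
  have h1 : T.relIndex (T ⊔ commutator H) ≠ 1 := by
    rw [Ne, Subgroup.relIndex_eq_one]
    intro h; exact hT (le_sup_right.trans h)
  have h2 : T.index ≠ 0 := Subgroup.index_ne_zero_of_finite
  have h3 : T.index ≠ 2 := by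
    intro h
    apply hT
    rw [commutator_def, Subgroup.commutator_le]
    intro a _ b _
    rw [commutatorElement_def]
    simp only [Subgroup.mul_mem_iff_of_index_two h, inv_mem_iff]
    tauto
  set r := T.relIndex (T ⊔ commutator H)
  set m := (T ⊔ commutator H).index
  have hr : r ≠ 0 := by rintro h0; rw [h0] at h; simp at h; omega
  have hm : m ≠ 0 := by rintro h0; rw [h0] at h; simp at h; omega
  have : 2 ≤ r := by omega
  by_cases hm1 : m = 1
  · rw [hm1] at h ⊢; omega
  · have : 2 * m ≤ r * m := Nat.mul_le_mul_right _ this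
    omega

lemma card_lin_le {H K : Type} [Group H] [Finite H] [Field K] (T : Subgroup H) :
    Nat.card (H →* Kˣ) ≤ (T ⊔ commutator H).index * Nat.card (T →* Kˣ) := by
  classical
  have hN : (T ⊔ commutator H).Normal := Subgroup.Normal.of_commutator_le _ le_sup_right
  have f1 := (card_hom_le H K).1
  have f2 := (card_hom_le T K).1
  obtain ⟨f3, c3⟩ := card_hom_le (H ⧸ (T ⊔ commutator H)) K
  let r : (H →* Kˣ) →* (T →* Kˣ) := MonoidHom.compHom' T.subtype
  have e := r.ker.card_mul_index
  rw [Subgroup.index_ker] at e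
  rw [← e]
  refine Nat.mul_le_mul ?_ (Nat.card_le_card_of_injective _ Subtype.val_injective)
  rw [Subgroup.index_eq_card]
  refine le_trans ?_ c3
  have hk : ∀ a : r.ker, (T ⊔ commutator H) ≤ (a : H →* Kˣ).ker := by
    intro a
    refine sup_le ?_ (Abelianization.commutator_subset_ker _)
    intro t ht
    have := DFunLike.congr_fun a.2 ⟨t, ht⟩
    simpa [r] using this
  refine Nat.card_le_card_of_injective (fun a : r.ker => QuotientGroup.lift _ (a : H →* Kˣ) (hk a)) ?_
  intro a b hab
  ext x
  have := DFunLike.congr_fun hab (QuotientGroup.mk x)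
  simpa using congrArg Units.val this

end counting
section final

lemma exists_char (p : ℕ) (hp : p.Prime) (V : Type) [CommGroup V] [Fintype V] [Nontrivial V]
    (helem : ∀ v : V, v ^ p = 1)
    (k : Subfield ℂ) (hk : ∀ ζ : ℂ, IsPrimitiveRoot ζ p → ζ ∈ k) :
    ∃ l : V →* kˣ, ∃ v, l v ≠ 1 := by
  have hexp : Monoid.exponent V = p := by
    rcases (Nat.dvd_prime hp).1 (Monoid.exponent_dvd_of_forall_pow_eq_one helem) with h | h
    · rw [Monoid.exp_eq_one_iff] at h
      exact absurd h (not_subsingleton V)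
    · exact h
  have : NeZero p := ⟨hp.ne_zero⟩
  have : HasEnoughRootsOfUnity k (Monoid.exponent V) := by
    rw [hexp]
    refine ⟨⟨⟨_, hk _ (Complex.isPrimitiveRoot_exp p hp.ne_zero)⟩, ?_⟩, inferInstance⟩
    exact IsPrimitiveRoot.of_map_of_injective (f := k.subtype)
      (Complex.isPrimitiveRoot_exp p hp.ne_zero) k.subtype.injective
  obtain ⟨v, hv⟩ := exists_ne (1 : V)
  obtain ⟨l, hl⟩ := CommGroup.exists_apply_ne_one_of_hasEnoughRootsOfUnity V k hv
  exact ⟨l, v, hl⟩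

variable {H V : Type} [Group H] [CommGroup V] (φ : H →* MulAut V)

lemma comm_not_le (hnab : ∃ x y : H, x * y ≠ y * x) (hfaith : Function.Injective φ)
    (hirr : ∀ W : Subgroup V, (∀ h : H, ∀ w ∈ W, φ h w ∈ W) → W = ⊥ ∨ W = ⊤)
    (l : V →* ℂˣ) (hl : ∃ v, l v ≠ 1) : ¬ commutator H ≤ stab φ l := by
  intro hle
  let W : Subgroup V := ⨅ x : H, (l.comp (φ x).toMonoidHom).ker
  have hWm : ∀ w, w ∈ W ↔ ∀ x, l (φ x w) = 1 := by
    intro w; simp only [W, Subgroup.mem_iInf, MonoidHom.mem_ker]; rfl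
  have hW : W = ⊥ := by
    refine (hirr W ?_).resolve_right ?_
    · intro h w hw
      rw [hWm] at hw ⊢
      intro x
      rw [← MulAut.mul_apply, ← map_mul]
      exact hw _
    · intro h
      obtain ⟨v, hv⟩ := hl
      have : v ∈ W := by rw [h]; trivial
      apply hv
      simpa using (hWm v).1 this 1
  obtain ⟨a, b, hab⟩ := hnab
  have hc : ∀ h ∈ commutator H, h = 1 := by
    intro h hh
    apply hfaith
    rw [map_one]
    ext v
    have : φ h v * v⁻¹ ∈ W := by
      rw [hWm]
      intro x
      have h1 : x * h * x⁻¹ ∈ commutator H := Subgroup.Normal.conj_mem inferInstance h hh x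
      have h2 := (mem_stab φ).1 (hle h1) (φ x v)
      rw [← MulAut.mul_apply, ← map_mul, inv_mul_cancel_right, map_mul, MulAut.mul_apply] at h2
      rw [map_mul, map_mul, h2, map_inv, map_inv, mul_inv_cancel]
    rw [hW, Subgroup.mem_bot, mul_inv_eq_one] at this
    simpa using this
  have := hc (a * b * a⁻¹ * b⁻¹) (by
    rw [← commutatorElement_def, commutator_def]
    exact Subgroup.commutator_mem_commutator (Subgroup.mem_top a) (Subgroup.mem_top b))
  rw [← commutatorElement_def, commutatorElement_eq_one_iff_mul_comm] at this
  exact hab this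

lemma lin_trivial (hnab : ∃ x y : H, x * y ≠ y * x) (hfaith : Function.Injective φ)
    (hirr : ∀ W : Subgroup V, (∀ h : H, ∀ w ∈ W, φ h w ∈ W) → W = ⊥ ∨ W = ⊤)
    {K : Type} [CommGroup K] (μ : V ⋊[φ] H →* K) (v : V) :
    μ (SemidirectProduct.inl v) = 1 := by
  have hinv : ∀ h v, μ (SemidirectProduct.inl (φ h v)) = μ (SemidirectProduct.inl v) := by
    intro h v
    rw [SemidirectProduct.inl_aut, map_mul, map_mul, mul_comm, ← mul_assoc, ← map_mul]
    simp
  let W : Subgroup V := (μ.comp SemidirectProduct.inl).ker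
  rcases hirr W (by
    intro h w hw
    simp only [W, MonoidHom.mem_ker, MonoidHom.comp_apply] at hw ⊢
    rw [hinv, hw]) with h | h
  · exfalso
    have : ∀ h, h = (1 : H) := by
      intro x
      apply hfaith
      ext v
      have : φ x v * v⁻¹ ∈ W := by
        simp only [W, MonoidHom.mem_ker, MonoidHom.comp_apply, map_mul, map_inv, hinv]
        simp
      rw [h, Subgroup.mem_bot, mul_inv_eq_one] at this
      simpa using this
    obtain ⟨a, b, hab⟩ := hnab
    exact hab (by rw [this a, this b])
  · have : v ∈ W := by rw [h]; trivial
    exact this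

end final
theorem nonabelian_semidirect_acd_ge_two
    (p : ℕ) (hp : p.Prime)
    (H V : Type) [Group H] [Fintype H] (hnab : ∃ x y : H, x * y ≠ y * x)
    [CommGroup V] [Fintype V] [Nontrivial V]
    (helem : ∀ v : V, v ^ p = 1)
    (φ : H →* MulAut V) (hfaith : Function.Injective φ)
    (hirr : ∀ W : Subgroup V, (∀ h : H, ∀ w ∈ W, φ h w ∈ W) → W = ⊥ ∨ W = ⊤)
    (k : Subfield ℂ) (hk : ∀ ζ : ℂ, IsPrimitiveRoot ζ p → ζ ∈ k) :
    2 ≤ acd {f ∈ Irr (V ⋊[φ] H) | ∀ g, f g ∈ k} := by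
  classical
  have : Fintype (V ⋊[φ] H) := Fintype.ofEquiv _ SemidirectProduct.equivProd.symm
  obtain ⟨l₀, hl₀⟩ := exists_char p hp V helem k hk
  let ι : kˣ →* ℂˣ := Units.map (k.subtype : k →* ℂ)
  have hι : Function.Injective ι := Units.map_injective k.subtype.injective
  let l : V →* ℂˣ := ι.comp l₀
  have hl : ∃ v, l v ≠ 1 := by
    obtain ⟨v, hv⟩ := hl₀
    exact ⟨v, fun h => hv (hι (by rw [map_one]; exact h))⟩
  have hcomm := comm_not_le φ hnab hfaith hirr l hl
  set T := stab φ l with hT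
  have hidx := index_bound T hcomm
  have hcard := card_lin_le (K := k) T
  have finA := (card_hom_le H k).1
  have finB := (card_hom_le T k).1
  have := Fintype.ofFinite (H →* kˣ)
  have := Fintype.ofFinite (T →* kˣ)
  set S : Set (V ⋊[φ] H → ℂ) := {f ∈ Irr (V ⋊[φ] H) | ∀ g, f g ∈ k} with hS
  have Sfin : S.Finite := (Irr_finite _).subset (fun f hf => hf.1)
  -- induced characters
  let F : (T →* kˣ) → (V ⋊[φ] H → ℂ) := fun ψ => (indRep φ l (ι.comp ψ)).character
  have Finj : Function.Injective F := by
    intro ψ ψ' h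
    have := ind_inj φ l _ _ h
    ext t
    have h2 := hι (DFunLike.congr_fun this t)
    rw [h2]
  have Fmem : ∀ ψ, F ψ ∈ S := by
    intro ψ
    refine ⟨ind_mem_Irr φ l _, fun g => ?_⟩
    simp only [F]
    rw [indRep_char]
    refine k.mul_mem (k.inv_mem (natCast_mem k _)) (k.sum_mem fun x _ => k.mul_mem ?_ ?_)
    · exact (l₀ _ : k).2
    · rw [dFun]
      split_ifs with hx
      · exact (ψ _ : k).2
      · exact k.zero_mem
  have Fone : ∀ ψ, F ψ 1 = (T.index : ℂ) := fun ψ => ind_one φ l _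
  let I : Finset (V ⋊[φ] H → ℂ) := Finset.univ.image F
  have Icard : I.card = Nat.card (T →* kˣ) := by
    rw [Finset.card_image_of_injective _ Finj, Nat.card_eq_fintype_card, Finset.card_univ]
  let s := Sfin.toFinset
  have hs : ∀ f, f ∈ s ↔ f ∈ S := fun f => Sfin.mem_toFinset
  let L := s.filter (fun f => f 1 = 1)
  have Lcard : L.card ≤ Nat.card (H →* kˣ) := by
    let E : (H →* kˣ) → (V ⋊[φ] H → ℂ) := fun a g => ((a g.right : k) : ℂ)
    have : L ⊆ Finset.univ.image E := by
      intro f hf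
      obtain ⟨hfs, hf1⟩ := Finset.mem_filter.1 hf
      obtain ⟨hfI, hfk⟩ := (hs f).1 hfs
      let μ₀ : V ⋊[φ] H →* k :=
        { toFun := fun g => ⟨f g, hfk g⟩
          map_one' := Subtype.ext hf1
          map_mul' := fun a b => Subtype.ext (Irr_mul hfI hf1 a b) }
      let μ : V ⋊[φ] H →* kˣ := μ₀.toHomUnits
      have hμ : ∀ g, ((μ g : k) : ℂ) = f g := fun g => rfl
      refine Finset.mem_image.2 ⟨μ.comp SemidirectProduct.inr, Finset.mem_univ _, ?_⟩
      ext g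
      rw [← hμ g]
      conv_rhs => rw [← SemidirectProduct.inl_left_mul_inr_right g, map_mul,
        lin_trivial φ hnab hfaith hirr μ, one_mul]
      rfl
    calc L.card ≤ _ := Finset.card_le_card this
      _ ≤ _ := Finset.card_image_le
      _ = _ := by rw [Nat.card_eq_fintype_card, Finset.card_univ]
  have hIs : I ⊆ s := by
    intro f hf
    obtain ⟨ψ, _, rfl⟩ := Finset.mem_image.1 hf
    exact (hs _).2 (Fmem ψ)
  have hidx0 : (T ⊔ commutator H).index ≠ 0 := Subgroup.index_ne_zero_of_finite
  have hdisj : Disjoint L I := by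
    rw [Finset.disjoint_left]
    intro f hfL hfI
    obtain ⟨ψ, _, rfl⟩ := Finset.mem_image.1 hfI
    have h1 := (Finset.mem_filter.1 hfL).2
    rw [Fone] at h1
    have : T.index = 1 := by exact_mod_cast h1
    omega
  have hbig : (0 : ℝ) ≤ ∑ f ∈ s, ((f 1).re - 2) := by
    have hsub : L ∪ I ⊆ s := Finset.union_subset (Finset.filter_subset _ _) hIs
    rw [← Finset.sum_sdiff hsub, Finset.sum_union hdisj]
    have h1 : (0 : ℝ) ≤ ∑ f ∈ s \ (L ∪ I), ((f 1).re - 2) := by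
      refine Finset.sum_nonneg fun f hf => ?_
      simp only [Finset.mem_sdiff, Finset.mem_union, not_or] at hf
      obtain ⟨hfs, hfL, -⟩ := hf
      obtain ⟨n, hn1, hn⟩ := Irr_deg ((hs f).1 hfs).1
      have hn2 : n ≠ 1 := by
        rintro rfl
        exact hfL (Finset.mem_filter.2 ⟨hfs, by simpa using hn⟩)
      have : (2 : ℝ) ≤ n := by exact_mod_cast (by omega : 2 ≤ n)
      rw [hn]; simpa using this
    have h2 : ∑ f ∈ L, ((f 1).re - 2) = -(L.card : ℝ) := by
      rw [Finset.sum_congr rfl (g := fun _ => (-1 : ℝ))]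
      · simp
      · intro f hf
        rw [(Finset.mem_filter.1 hf).2]; norm_num
    have h3 : ∑ f ∈ I, ((f 1).re - 2) = (I.card : ℝ) * (T.index - 2) := by
      rw [Finset.sum_congr rfl (g := fun _ => ((T.index : ℝ) - 2))]
      · rw [Finset.sum_const, nsmul_eq_mul]
      · intro f hf
        obtain ⟨ψ, _, rfl⟩ := Finset.mem_image.1 hf
        rw [Fone]; simp
    rw [h2, h3]
    have h4 : (L.card : ℝ) ≤ (T ⊔ commutator H).index * I.card := by
      rw [Icard]; exact_mod_cast Lcard.trans hcard
    have h5 : ((T ⊔ commutator H).index : ℝ) + 2 ≤ T.index := by exact_mod_cast hidx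
    have h6 : (0 : ℝ) ≤ I.card := Nat.cast_nonneg _
    nlinarith
  have hne : 0 < s.card := Finset.card_pos.2 ⟨F 1, (hs _).2 (Fmem 1)⟩
  rw [acd, finsum_mem_eq_finite_toFinset_sum _ Sfin, Set.ncard_eq_toFinset_card S Sfin,
    le_div_iff₀ (by exact_mod_cast hne)]
  rw [Finset.sum_sub_distrib] at hbig
  simp only [Finset.sum_const, nsmul_eq_mul] at hbig
  change (2 : ℝ) * s.card ≤ ∑ f ∈ s, (f 1).re
  linarith
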